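/- Let 1/3<β<1/2, let f:ℝ^m→ℝ^d be continuously differentiable with f′ λ-Hölder continuous for some λ>1/β−2, let 0<α<(1+λ)β, and let x:[a,b]→ℝ^m be β-Hölder continuous. Then the compensated fractional derivative D̂_{a+}^α f(x)(r) is well defined for a<r≤b and satisfies |D̂_{a+}^α f(x)(r)| ≤ k( |f(x_r)| (r−a)^{−α} + ‖f′‖_λ ‖x‖_{a,r,β}^{1+λ} (r−a)^{(λ+1)β−α} ), where k is a constant depending only on α, β, λ and ‖f′‖_λ is the λ-Hölder seminorm of f′. -/

import Mathlib

/-!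
Since `f'` is `lam`-Hölder, the mean value inequality on the segment from `x_θ` to `x_r` bounds the
first order Taylor remainder by `L ‖x_r - x_θ‖ ^ (1 + lam)` (`taylor_holder`). Combined with
`‖x_r - x_θ‖ ≤ ‖x‖_{a,r,β} (r - θ) ^ β` (`norm_sub_le_hoNorm`), the integrand is dominated by
`L ‖x‖_{a,r,β} ^ (1 + lam) (r - θ) ^ (γ - 1)` with `γ = (lam + 1) β - α`. As `γ > 0` this is
integrable, with integral `(r - a) ^ γ / γ` up to the constant factor, so
`k = |Γ(1 - α)⁻¹| (1 + α / γ)` works.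
-/

open MeasureTheory Set

noncomputable section

namespace RoughPaper

/-- The complex phase `(-1)^γ := e^{-iπγ}`. -/
def negPow (γ : ℝ) : ℂ := Complex.exp (-(Real.pi : ℂ) * (γ : ℂ) * Complex.I)

/-- Left-sided Weyl fractional derivative `D_{a+}^γ g (t)`. -/
def DPlus (γ a : ℝ) (g : ℝ → ℂ) (t : ℝ) : ℂ :=
  ((Real.Gamma (1 - γ) : ℝ) : ℂ)⁻¹ *
    (g t / (((t - a) ^ γ : ℝ) : ℂ) +
      (γ : ℂ) * ∫ s in a..t, (g t - g s) / (((t - s) ^ (γ + 1) : ℝ) : ℂ))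

/-- Right-sided Weyl fractional derivative `D_{b-}^γ g (t)`, carrying the phase `(-1)^γ`. -/
def DMinus (γ b : ℝ) (g : ℝ → ℂ) (t : ℝ) : ℂ :=
  negPow γ * ((Real.Gamma (1 - γ) : ℝ) : ℂ)⁻¹ *
    (g t / (((b - t) ^ γ : ℝ) : ℂ) +
      (γ : ℂ) * ∫ s in t..b, (g t - g s) / (((s - t) ^ (γ + 1) : ℝ) : ℂ))

/-- `Γ^γ ψ(ξ,η) := D_{η-}^{1-γ,ξ} D_{ξ+}^{1-γ,η} ψ(ξ,η)`. -/
def GammaOp (γ : ℝ) (ψ : ℝ → ℝ → ℂ) (ξ η : ℝ) : ℂ :=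
  DMinus (1 - γ) η (fun u => DPlus (1 - γ) u (ψ u) η) ξ

/-- The kernel `G(θ,ξ,η)`. -/
def Gker (α θ ξ η : ℝ) : ℝ :=
  (α * Real.Gamma α * Real.Gamma (2 * α - 1))⁻¹ * (ξ - θ) ^ (α - 1) * (η - ξ) ^ (α - 1) *
    ∫ q in (0:ℝ)..1, q ^ (2 * α - 2) * (1 - q) ^ (-α) * (1 + (1 - q) * (ξ - θ) / (η - ξ))⁻¹

/-- The kernel `K_{θ,b}(ξ,η) := -D_{θ+}^{α-ε,ξ} D_{b-}^{α-ε,η} [G(θ,ξ,η) - G(θ,ξ,b)]`. -/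
def Kker (α ε θ b ξ η : ℝ) : ℂ :=
  -(DPlus (α - ε) θ
      (fun u => DMinus (α - ε) b (fun v => ((Gker α θ u v - Gker α θ u b : ℝ) : ℂ)) η) ξ)

/-- `Λ_a^b` applied to a (complex-valued) two parameter function. -/
def LamC (α ε a b : ℝ) (ψ : ℝ → ℝ → ℂ) : ℂ :=
  ∫ η in a..b, ∫ ξ in a..η, Kker α ε a b ξ η * GammaOp (α - ε) ψ ξ η

/-- `Λ_a^b (x ⊗ y)` for a real two parameter function. -/
def Lam (α ε a b : ℝ) (z : ℝ → ℝ → ℝ) : ℂ :=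
  LamC α ε a b fun u v => ((z u v : ℝ) : ℂ)

variable {E F : Type*} [NormedAddCommGroup E]

/-- compensated fractional derivative `D̂_{a+}^α f(x)(r)` (scalar-valued `f`). -/
def Dhat [NormedSpace ℝ E] (α a : ℝ) (f : E → ℝ) (x : ℝ → E) (r : ℝ) : ℝ :=
  (Real.Gamma (1 - α))⁻¹ *
    (f (x r) / (r - a) ^ α +
      α * ∫ θ in a..r,
        (f (x r) - f (x θ) - fderiv ℝ f (x θ) (x r - x θ)) / (r - θ) ^ (α + 1))

/-- compensated fractional derivative `D̂_{a+}^α f(x)(r)` (vector-valued `f`). -/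
def DhatV [NormedSpace ℝ E] [NormedAddCommGroup F] [NormedSpace ℝ F] [CompleteSpace F]
    (α a : ℝ) (f : E → F) (x : ℝ → E) (r : ℝ) : F :=
  (Real.Gamma (1 - α))⁻¹ •
    (((r - a) ^ α)⁻¹ • f (x r) +
      α • ∫ θ in a..r,
        ((r - θ) ^ (α + 1))⁻¹ • (f (x r) - f (x θ) - fderiv ℝ f (x θ) (x r - x θ)))

/-- compensated fractional derivative, scalar path version. -/
def DhatR (α a : ℝ) (f : ℝ → ℝ) (x : ℝ → ℝ) (r : ℝ) : ℝ :=
  (Real.Gamma (1 - α))⁻¹ *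
    (f (x r) / (r - a) ^ α +
      α * ∫ θ in a..r,
        (f (x r) - f (x θ) - deriv f (x θ) * (x r - x θ)) / (r - θ) ^ (α + 1))

/-- Hölder seminorm `‖x‖_{a,b,β}` of a path. -/
def hoNorm (β a b : ℝ) (x : ℝ → E) : ℝ :=
  sSup ((fun p : ℝ × ℝ => ‖x p.2 - x p.1‖ / (p.2 - p.1) ^ β) ''
    {p : ℝ × ℝ | a ≤ p.1 ∧ p.1 < p.2 ∧ p.2 ≤ b})

/-- Hölder norm `‖z‖_{a,b,β}` of a two-parameter function (with exponent `2β`). -/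
def hoNorm2 (β a b : ℝ) (z : ℝ → ℝ → E) : ℝ :=
  sSup ((fun p : ℝ × ℝ => ‖z p.1 p.2‖ / (p.2 - p.1) ^ (2 * β)) ''
    {p : ℝ × ℝ | a ≤ p.1 ∧ p.1 < p.2 ∧ p.2 ≤ b})

/-- Hölder norm of a matrix-indexed two-parameter function. -/
def hoNorm2M {m d : ℕ} (β a b : ℝ) (z : Fin m → Fin d → ℝ → ℝ → ℝ) : ℝ :=
  sSup {r : ℝ | ∃ (i : Fin m) (j : Fin d) (p : ℝ × ℝ),
    a ≤ p.1 ∧ p.1 < p.2 ∧ p.2 ≤ b ∧ r = |z i j p.1 p.2| / (p.2 - p.1) ^ (2 * β)}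

/-- supremum norm on `[a,b]`. -/
def supNorm (a b : ℝ) (x : ℝ → E) : ℝ :=
  sSup ((fun t => ‖x t‖) '' Set.Icc a b)

/-- `x` is `β`-Hölder continuous on `[a,b]`. -/
def IsHolderPath (β a b : ℝ) (x : ℝ → E) : Prop :=
  ∃ C : ℝ, ∀ s t : ℝ, a ≤ s → s ≤ t → t ≤ b → ‖x t - x s‖ ≤ C * (t - s) ^ β

/-- real-valued `β`-Hölder continuous multiplicative functional on `[0,T]`. -/
def IsMultFuncR (β T : ℝ) (x y : ℝ → ℝ) (xy : ℝ → ℝ → ℝ) : Prop :=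
  IsHolderPath β 0 T x ∧ IsHolderPath β 0 T y ∧
  ContinuousOn (fun p : ℝ × ℝ => xy p.1 p.2) {p : ℝ × ℝ | 0 ≤ p.1 ∧ p.1 ≤ p.2 ∧ p.2 ≤ T} ∧
  (∀ s u t : ℝ, 0 ≤ s → s ≤ u → u ≤ t → t ≤ T →
    xy s u + xy u t + (x u - x s) * (y t - y u) = xy s t) ∧
  (∃ k : ℝ, ∀ s t : ℝ, 0 ≤ s → s ≤ t → t ≤ T → |xy s t| ≤ k * (t - s) ^ (2 * β))

/-- `β`-Hölder continuous multiplicative functional on `ℝ^m ⊗ ℝ^d` on `[0,T]`. -/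
def IsMultFunc {m d : ℕ} (β T : ℝ) (x : ℝ → EuclideanSpace ℝ (Fin m))
    (y : ℝ → EuclideanSpace ℝ (Fin d)) (xy : Fin m → Fin d → ℝ → ℝ → ℝ) : Prop :=
  IsHolderPath β 0 T x ∧ IsHolderPath β 0 T y ∧
  ∀ i j, IsMultFuncR β T (fun t => x t i) (fun t => y t j) (xy i j)

/-- The fractional-calculus rough integral `∫_a^b f(x_r) dy_r`. -/
def fracInt (α ε : ℝ) {m d : ℕ}
    (f : EuclideanSpace ℝ (Fin m) → EuclideanSpace ℝ (Fin d))
    (x : ℝ → EuclideanSpace ℝ (Fin m)) (y : ℝ → EuclideanSpace ℝ (Fin d))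
    (xy : Fin m → Fin d → ℝ → ℝ → ℝ) (a b : ℝ) : ℂ :=
  negPow α * ∑ i : Fin d, ∫ r in a..b,
      ((Dhat α a (fun v => f v i) x r : ℝ) : ℂ) *
        DMinus (1 - α) b (fun s => ((y s i - y b i : ℝ) : ℂ)) r
  + ∑ i : Fin m, ∑ j : Fin d, ∫ r in a..b,
      DPlus (2 * α - 1) a
        (fun s => ((fderiv ℝ (fun v => f v j) (x s) (EuclideanSpace.single i (1:ℝ)) : ℝ) : ℂ)) r *
        Lam α ε r b (xy i j)

/-- The fractional-calculus integral of `g(x)` against a scalar driver `w`,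
with prescribed (complex-valued) cross functionals `x^l ⊗ w`. -/
def fracIntW (α ε : ℝ) {m : ℕ} (g : EuclideanSpace ℝ (Fin m) → ℝ)
    (x : ℝ → EuclideanSpace ℝ (Fin m)) (w : ℝ → ℝ) (xw : Fin m → ℝ → ℝ → ℂ) (a b : ℝ) : ℂ :=
  negPow α * ∫ r in a..b,
      ((Dhat α a g x r : ℝ) : ℂ) * DMinus (1 - α) b (fun s => ((w s - w b : ℝ) : ℂ)) r
  + ∑ l : Fin m, ∫ r in a..b,
      DPlus (2 * α - 1) a
        (fun s => ((fderiv ℝ g (x s) (EuclideanSpace.single l (1:ℝ)) : ℝ) : ℂ)) r *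
        LamC α ε r b (xw l)

/-- Scalar fractional-calculus integral of `f(x)` against a driver `w` with cross functional `xw`. -/
def fracIntR (α ε : ℝ) (f : ℝ → ℝ) (x : ℝ → ℝ) (w : ℝ → ℝ) (xw : ℝ → ℝ → ℂ) (a b : ℝ) : ℂ :=
  negPow α * ∫ r in a..b,
      ((DhatR α a f x r : ℝ) : ℂ) * DMinus (1 - α) b (fun s => ((w s - w b : ℝ) : ℂ)) r
  + ∫ r in a..b,
      DPlus (2 * α - 1) a (fun s => ((deriv f (x s) : ℝ) : ℂ)) r * LamC α ε r b xw

/-- `Λ_{a,r,b,c}(x,z)`. -/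
def LamFour (α a r c : ℝ) (x z : ℝ → ℝ) : ℂ :=
  negPow α * ((Real.Gamma (1 - α) : ℝ) : ℂ)⁻¹ *
    ((((x r - x a) * (z c - z r) / (r - a) ^ α : ℝ) : ℂ) +
      (α : ℂ) * ((∫ θ in a..r, (z r - z θ) * (x θ - x r) / (r - θ) ^ (α + 1) : ℝ) : ℂ))

/-- The cross functional `(x ⊗ (y ⊗ z)_{·,c})_{a,b}`. -/
def crossTensor (α ε : ℝ) (x y z : ℝ → ℝ) (xy yz : ℝ → ℝ → ℝ) (c a b : ℝ) : ℂ :=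
  (∫ r in a..b, LamFour α a r c x z * DMinus (1 - α) b (fun s => ((y s - y b : ℝ) : ℂ)) r)
  + ((Real.Gamma (2 - 2 * α) : ℝ) : ℂ)⁻¹ *
    ∫ r in a..b, ∫ η in r..b, ∫ ξ in r..η,
      Kker α ε r b ξ η *
        (GammaOp (α - ε) (fun u v => ((xy u v : ℝ) : ℂ)) ξ η * ((z c - z r : ℝ) : ℂ)
          - ((x r - x a : ℝ) : ℂ) * GammaOp (α - ε) (fun u v => ((yz u v : ℝ) : ℂ)) ξ η) *
        (((r - a) ^ (1 - 2 * α) : ℝ) : ℂ)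

/-- First order Taylor estimate for a map whose derivative is `lam`-Hölder; `L` may be negative,
which forces the source space to be a point. -/
lemma taylor_holder {E F : Type*} [NormedAddCommGroup E] [NormedSpace ℝ E]
    [NormedAddCommGroup F] [NormedSpace ℝ F] {f : E → F} {L lam : ℝ} (hlam : 0 < lam)
    (hf : ContDiff ℝ 1 f)
    (hL : ∀ u v, ‖fderiv ℝ f u - fderiv ℝ f v‖ ≤ L * ‖u - v‖ ^ lam) (u v : E) :
    ‖f v - f u - fderiv ℝ f u (v - u)‖ ≤ max L 0 * ‖v - u‖ ^ (1 + lam) := by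
  have hseg : ∀ z ∈ segment ℝ u v,
      ‖fderiv ℝ f z - fderiv ℝ f u‖ ≤ max L 0 * ‖v - u‖ ^ lam := by
    intro z hz
    have hzu : ‖z - u‖ ≤ ‖v - u‖ := by
      have := norm_sub_le_of_mem_segment hz
      simpa using this
    calc ‖fderiv ℝ f z - fderiv ℝ f u‖ ≤ L * ‖z - u‖ ^ lam := hL z u
      _ ≤ max L 0 * ‖v - u‖ ^ lam := by
        gcongr
        exact le_max_left _ _
  have h := (convex_segment u v).norm_image_sub_le_of_norm_hasFDerivWithin_le'
    (fun z _ => ((hf.differentiable one_ne_zero) z).hasFDerivAt.hasFDerivWithinAt) hseg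
    (left_mem_segment ℝ u v) (right_mem_segment ℝ u v)
  rwa [mul_assoc, ← Real.rpow_add_one' (norm_nonneg _) (by positivity), add_comm lam] at h

lemma hoNorm_nonneg' {E : Type*} [NormedAddCommGroup E] (β a b : ℝ) (x : ℝ → E) :
    0 ≤ hoNorm β a b x := by
  apply Real.sSup_nonneg
  rintro _ ⟨p, ⟨_, hp, _⟩, rfl⟩
  have := Real.rpow_nonneg (sub_nonneg.2 hp.le) β
  positivity

/-- The supremum defining `hoNorm` is finite for a Hölder path, so it is a Hölder constant. -/
lemma norm_sub_le_hoNorm {E : Type*} [NormedAddCommGroup E] {β a b r : ℝ} {x : ℝ → E}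
    (hβ : 0 < β) (hx : IsHolderPath β a b x) (hrb : r ≤ b) {s t : ℝ} (has : a ≤ s) (hst : s ≤ t)
    (htr : t ≤ r) : ‖x t - x s‖ ≤ hoNorm β a r x * (t - s) ^ β := by
  rcases hst.eq_or_lt with rfl | hlt
  · simp [Real.zero_rpow hβ.ne']
  obtain ⟨C, hC⟩ := hx
  rw [← div_le_iff₀ (Real.rpow_pos_of_pos (sub_pos.2 hlt) β)]
  refine le_csSup ⟨C, ?_⟩ ⟨(s, t), ⟨has, hlt, htr⟩, rfl⟩
  rintro _ ⟨p, ⟨h1, h2, h3⟩, rfl⟩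
  exact (div_le_iff₀ (Real.rpow_pos_of_pos (sub_pos.2 h2) β)).2
    (hC _ _ h1 h2.le (h3.trans hrb))

lemma continuousOn_of_isHolderPath {E : Type*} [NormedAddCommGroup E] {β a b : ℝ} {x : ℝ → E}
    (hβ : 0 < β) (hx : IsHolderPath β a b x) : ContinuousOn x (Icc a b) := by
  intro s hs
  obtain ⟨C, hC⟩ := hx
  have hbound : ∀ t ∈ Icc a b, ‖x t - x s‖ ≤ C * |t - s| ^ β := by
    intro t ht
    rcases le_total s t with h | h
    · rw [abs_of_nonneg (sub_nonneg.2 h)]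
      exact hC s t hs.1 h ht.2
    · rw [abs_sub_comm, norm_sub_rev, abs_of_nonneg (sub_nonneg.2 h)]
      exact hC t s ht.1 h hs.2
  refine tendsto_iff_norm_sub_tendsto_zero.2 (squeeze_zero' (.of_forall fun _ => norm_nonneg _)
    (Filter.eventually_of_mem self_mem_nhdsWithin hbound) ?_)
  have hc : Continuous fun t : ℝ => C * |t - s| ^ β :=
    continuous_const.mul ((continuous_id.sub continuous_const).abs.rpow_const fun _ => .inr hβ.le)
  have h0 : C * |s - s| ^ β = 0 := by simp [Real.zero_rpow hβ.ne']
  have := hc.tendsto s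
  rw [h0] at this
  exact this.mono_left nhdsWithin_le_nhds

theorem statement4 (β lam α : ℝ)
    (hβ : 1/3 < β ∧ β < 1/2) (hlam : 1/β - 2 < lam)
    (hα0 : 0 < α) (hα : α < (1 + lam) * β) :
    ∃ k : ℝ, ∀ (m d : ℕ) (f : EuclideanSpace ℝ (Fin m) → EuclideanSpace ℝ (Fin d))
      (x : ℝ → EuclideanSpace ℝ (Fin m)) (a b L : ℝ),
      ContDiff ℝ 1 f →
      (∀ u v, ‖fderiv ℝ f u - fderiv ℝ f v‖ ≤ L * ‖u - v‖ ^ lam) →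
      IsHolderPath β a b x →
      ∀ r : ℝ, a < r → r ≤ b →
        IntervalIntegrable (fun θ =>
            ((r - θ) ^ (α + 1))⁻¹ • (f (x r) - f (x θ) - fderiv ℝ f (x θ) (x r - x θ)))
          MeasureTheory.volume a r ∧
        ‖DhatV α a f x r‖ ≤
          k * (‖f (x r)‖ * (r - a) ^ (-α) +
            L * hoNorm β a r x ^ (1 + lam) * (r - a) ^ ((lam + 1) * β - α)) := by
  obtain ⟨hβ1, hβ2⟩ := hβ
  have hβ0 : 0 < β := by linarith
  have hlam0 : 0 < lam := by
    have : 2 < 1 / β := by rw [lt_div_iff₀ hβ0]; linarith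
    linarith
  set γ : ℝ := (lam + 1) * β - α with hγdef
  have hγ : 0 < γ := by rw [hγdef]; linarith [add_comm lam 1 ▸ hα]
  refine ⟨|(Real.Gamma (1 - α))⁻¹| * (1 + α / γ), ?_⟩
  intro m d f x a b L hf hL hx r har hrb
  set H := hoNorm β a r x with hH
  have hH0 : 0 ≤ H := hoNorm_nonneg' _ _ _ _
  -- If `L < 0` the source space is a point and `H` vanishes.
  have hLH : max L 0 * H ^ (1 + lam) = L * H ^ (1 + lam) := by
    rcases le_total 0 L with h | h
    · rw [max_eq_left h]
    rcases h.eq_or_lt with rfl | h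
    · simp
    have hsub : ∀ u v : EuclideanSpace ℝ (Fin m), u = v := by
      intro u v
      by_contra huv
      have h1 := Real.rpow_pos_of_pos (norm_pos_iff.2 (sub_ne_zero.2 huv)) lam
      have h2 := (norm_nonneg _).trans (hL u v)
      nlinarith
    have hH00 : H ≤ 0 := by
      apply Real.sSup_nonpos
      rintro _ ⟨p, -, rfl⟩
      simp [hsub (x p.2) (x p.1)]
    rw [le_antisymm hH00 hH0, Real.zero_rpow (by positivity)]
    simp
  set K := L * H ^ (1 + lam) with hK
  have hK0 : 0 ≤ K := by rw [← hLH]; positivity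
  set R : ℝ → EuclideanSpace ℝ (Fin d) := fun θ =>
    ((r - θ) ^ (α + 1))⁻¹ • (f (x r) - f (x θ) - fderiv ℝ f (x θ) (x r - x θ)) with hR
  have hbound : ∀ θ ∈ Ioc a r, ‖R θ‖ ≤ K * (r - θ) ^ (γ - 1) := by
    rintro θ ⟨haθ, hθr⟩
    rcases hθr.eq_or_lt with rfl | hlt
    · simp only [hR, sub_self, map_zero, smul_zero, norm_zero]
      exact mul_nonneg hK0 (Real.rpow_nonneg le_rfl _)
    have hpos : 0 < r - θ := sub_pos.2 hlt
    have hT := taylor_holder hlam0 hf hL (x θ) (x r)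
    have hX : ‖x r - x θ‖ ^ (1 + lam) ≤ H ^ (1 + lam) * (r - θ) ^ ((lam + 1) * β) := by
      calc ‖x r - x θ‖ ^ (1 + lam) ≤ (H * (r - θ) ^ β) ^ (1 + lam) := by
            gcongr
            exact norm_sub_le_hoNorm hβ0 hx hrb haθ.le hlt.le le_rfl
        _ = H ^ (1 + lam) * (r - θ) ^ ((lam + 1) * β) := by
            rw [Real.mul_rpow hH0 (by positivity), ← Real.rpow_mul hpos.le,
              mul_comm β, add_comm 1 lam]
    have hP : (r - θ) ^ (γ - 1) = ((r - θ) ^ (α + 1))⁻¹ * (r - θ) ^ ((lam + 1) * β) := by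
      rw [← Real.rpow_neg hpos.le, ← Real.rpow_add hpos]
      congr 1
      rw [hγdef]; ring
    calc ‖R θ‖ = ((r - θ) ^ (α + 1))⁻¹ *
          ‖f (x r) - f (x θ) - fderiv ℝ f (x θ) (x r - x θ)‖ := by
          simp only [hR]
          rw [norm_smul, Real.norm_of_nonneg (by positivity)]
      _ ≤ ((r - θ) ^ (α + 1))⁻¹ *
          (max L 0 * (H ^ (1 + lam) * (r - θ) ^ ((lam + 1) * β))) := by
          gcongr
          exact hT.trans (by gcongr)
      _ = K * (r - θ) ^ (γ - 1) := by
          rw [hP, ← hLH]; ring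
  have hint : IntervalIntegrable (fun θ => K * (r - θ) ^ (γ - 1)) volume a r := by
    have h := (intervalIntegral.intervalIntegrable_rpow' (a := r - a) (b := 0)
      (r := γ - 1) (by linarith)).comp_sub_left r
    simp only [sub_sub_cancel, sub_zero] at h
    exact h.const_mul K
  have hmeas : AEStronglyMeasurable R (volume.restrict (Set.uIoc a r)) := by
    rw [uIoc_of_le har.le]
    have hxc : ContinuousOn x (Ioc a r) :=
      (continuousOn_of_isHolderPath hβ0 hx).mono
        (Ioc_subset_Icc_self.trans (Icc_subset_Icc_right hrb))
    have hc : ContinuousOn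
        (fun θ => f (x r) - f (x θ) - fderiv ℝ f (x θ) (x r - x θ)) (Ioc a r) :=
      (continuousOn_const.sub (hf.continuous.comp_continuousOn hxc)).sub
        (((hf.continuous_fderiv one_ne_zero).comp_continuousOn hxc).clm_apply
          (continuousOn_const.sub hxc))
    have hm : Measurable fun θ : ℝ => ((r - θ) ^ (α + 1))⁻¹ := by fun_prop
    exact hm.aestronglyMeasurable.smul (hc.aestronglyMeasurable measurableSet_Ioc)
  have hRint : IntervalIntegrable R volume a r := by
    refine hint.mono_fun' hmeas ?_
    rw [uIoc_of_le har.le]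
    exact (ae_restrict_iff' measurableSet_Ioc).2 (.of_forall hbound)
  refine ⟨hRint, ?_⟩
  have hI : ‖∫ θ in a..r, R θ‖ ≤ K * ((r - a) ^ γ / γ) := by
    have h1 := intervalIntegral.norm_integral_le_of_norm_le har.le (.of_forall hbound) hint
    have h2 : ∫ θ in a..r, K * (r - θ) ^ (γ - 1) = K * ((r - a) ^ γ / γ) := by
      rw [intervalIntegral.integral_const_mul,
        intervalIntegral.integral_comp_sub_left (fun t => t ^ (γ - 1)) r, sub_self,
        integral_rpow (.inl (by linarith))]
      simp [Real.zero_rpow hγ.ne']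
    exact h1.trans h2.le
  have hra : 0 < r - a := sub_pos.2 har
  have hA : 0 ≤ ‖f (x r)‖ * (r - a) ^ (-α) := by positivity
  have hB : 0 ≤ K * (r - a) ^ γ := by positivity
  have hαγ : 0 ≤ α / γ := by positivity
  calc ‖DhatV α a f x r‖
      = |(Real.Gamma (1 - α))⁻¹| *
          ‖((r - a) ^ α)⁻¹ • f (x r) + α • ∫ θ in a..r, R θ‖ := by
        rw [DhatV, norm_smul, Real.norm_eq_abs]
    _ ≤ |(Real.Gamma (1 - α))⁻¹| *
          (‖f (x r)‖ * (r - a) ^ (-α) + α * (K * ((r - a) ^ γ / γ))) := by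
        gcongr
        refine (norm_add_le _ _).trans (add_le_add ?_ ?_)
        · rw [norm_smul, Real.norm_of_nonneg (by positivity), Real.rpow_neg hra.le, mul_comm]
        · rw [norm_smul, Real.norm_of_nonneg hα0.le]
          gcongr
    _ ≤ |(Real.Gamma (1 - α))⁻¹| * ((1 + α / γ) *
          (‖f (x r)‖ * (r - a) ^ (-α) + K * (r - a) ^ γ)) := by
        gcongr
        have : α * (K * ((r - a) ^ γ / γ)) = α / γ * (K * (r - a) ^ γ) := by ring
        rw [this]
        nlinarith [mul_nonneg hαγ hA]
    _ = _ := by ring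

end RoughPaper
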